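/- There exists a constant C_s > 0, independent of m, such that for every integer m ≥ 1 and every axially symmetric function f that is continuously differentiable on a neighborhood of the closure of D_m, (∫_{D_m} |f|^{13/5} dx)^{10/13} ≤ C_s ∫_{D_m} ( |∇f|² + f²/r² ) dx. -/

import Mathlib

noncomputable section

open Real MeasureTheory Set

/-- Inner radius of the `j`-th rectangle: `r_j = 2^(-j)`. -/
def rW (j : ℕ) : ℝ := (2 : ℝ) ^ (-(j : ℝ))

/-- Height of the `j`-th rectangle: `h_j = 2^(-β (j-1))`. -/
def hH (β : ℝ) (j : ℕ) : ℝ := (2 : ℝ) ^ (-β * ((j : ℝ) - 1))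

/-- The rectangle `S_j` in the `(r, x₃)` cross-section. -/
def Srect (β : ℝ) (j : ℕ) : Set (ℝ × ℝ) :=
  {p : ℝ × ℝ | rW j ≤ p.1 ∧ p.1 < rW (j - 1) ∧ 0 < p.2 ∧ p.2 < hH β j}

/-- The `(r, x₃)` cross-section of the domain `D_m`. -/
def Ddom (β : ℝ) (m : ℕ) : Set (ℝ × ℝ) := ⋃ j ∈ Finset.Icc 1 m, Srect β j

/-- The horizontal part `∂^H D_m` of the boundary of `D_m` (where `x₃` is locally constant). -/
def bdH (β : ℝ) (m : ℕ) : Set (ℝ × ℝ) :=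
  {p : ℝ × ℝ | p.2 = 0 ∧ rW m ≤ p.1 ∧ p.1 ≤ 1} ∪
    ⋃ j ∈ Finset.Icc 1 m,
      {p : ℝ × ℝ | p.2 = hH β j ∧ rW j ≤ p.1 ∧ p.1 ≤ rW (j - 1)}

/-- The vertical part `∂^V D_m` of the boundary of `D_m` (where `r` is locally constant). -/
def bdV (β : ℝ) (m : ℕ) : Set (ℝ × ℝ) :=
  {p : ℝ × ℝ | p.1 = 1 ∧ 0 ≤ p.2 ∧ p.2 ≤ 1} ∪
    {p : ℝ × ℝ | p.1 = rW m ∧ 0 ≤ p.2 ∧ p.2 ≤ hH β m} ∪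
    ⋃ j ∈ Finset.Icc 1 (m - 1),
      {p : ℝ × ℝ | p.1 = rW j ∧ hH β (j + 1) ≤ p.2 ∧ p.2 ≤ hH β j}

/-- The full boundary `∂ D_m` of `D_m`. -/
def bdD (β : ℝ) (m : ℕ) : Set (ℝ × ℝ) := bdH β m ∪ bdV β m

/-- The corner points of the polygonal cross-section of `D_m`
(i.e. the corner circles of the 3D domain). -/
def cornerSet (β : ℝ) (m : ℕ) : Set (ℝ × ℝ) :=
  ({(rW m, 0), ((1 : ℝ), 0), ((1 : ℝ), (1 : ℝ)), (rW m, hH β m)} : Set (ℝ × ℝ)) ∪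
    ⋃ j ∈ Finset.Icc 1 (m - 1),
      ({(rW j, hH β j), (rW j, hH β (j + 1))} : Set (ℝ × ℝ))

/-- Radial partial derivative `∂_r`. -/
def pdr (F : ℝ × ℝ → ℝ) (p : ℝ × ℝ) : ℝ := deriv (fun r => F (r, p.2)) p.1

/-- Vertical partial derivative `∂_{x₃}`. -/
def pdz (F : ℝ × ℝ → ℝ) (p : ℝ × ℝ) : ℝ := deriv (fun z => F (p.1, z)) p.2

/-- The axially symmetric Laplacian `Δ = ∂_r² + (1/r) ∂_r + ∂_{x₃}²`. -/
def cylLap (F : ℝ × ℝ → ℝ) (p : ℝ × ℝ) : ℝ :=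
  pdr (pdr F) p + (1 / p.1) * pdr F p + pdz (pdz F) p

/-- The integral of an axially symmetric function over the 3-dimensional domain `D_m`,
computed in the cross-section: `∫_{D_m} f dx = 2π ∬ F r dr dx₃`. -/
def cylIntegral (β : ℝ) (m : ℕ) (F : ℝ × ℝ → ℝ) : ℝ :=
  ∫ p in Ddom β m, F p * (2 * π * p.1)

/-- The vertical cross-section segment `D_m ∩ {r = c}` of the cross-section. -/
def vertSeg (β : ℝ) (m : ℕ) (c : ℝ) : Set ℝ := {z : ℝ | (c, z) ∈ Ddom β m}
lemma one_d (g g' : ℝ → ℝ) (a b : ℝ) (hab : a < b)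
    (hg : ∀ x ∈ Icc a b, HasDerivAt g (g' x) x) (hg' : ContinuousOn g' (Icc a b))
    (x : ℝ) (hx : x ∈ Icc a b) :
    g x ^ 2 ≤ ∫ y in Icc a b, (g y ^ 2 / (b - a) + 2 * |g y * g' y|) := by
  have hgc : ContinuousOn g (Icc a b) := fun y hy => (hg y hy).continuousAt.continuousWithinAt
  have i1 : IntegrableOn (fun y => g y ^ 2) (Icc a b) :=
    (hgc.pow 2).integrableOn_Icc
  have i2 : IntegrableOn (fun y => 2 * |g y * g' y|) (Icc a b) :=
    (continuousOn_const.mul (hgc.mul hg').abs).integrableOn_Icc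
  set M := ∫ y in Icc a b, 2 * |g y * g' y| with hM
  have key : ∀ y ∈ Icc a b, g x ^ 2 - M ≤ g y ^ 2 := by
    intro y hy
    have hsub : uIcc y x ⊆ Icc a b := by
      rw [← uIcc_of_le hab.le] at hx hy ⊢
      exact uIcc_subset_uIcc hy hx
    have hftc : ∫ z in y..x, 2 * (g z * g' z) = g x ^ 2 - g y ^ 2 := by
      refine intervalIntegral.integral_eq_sub_of_hasDerivAt (f := fun z => g z ^ 2) ?_ ?_
      · intro z hz
        have := (hg z (hsub hz)).pow 2
        refine HasDerivAt.congr_deriv (f := fun z => g z ^ 2) this ?_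
        simp [mul_assoc]
      · exact (continuousOn_const.mul ((hgc.mul hg').mono hsub)).intervalIntegrable
    have h1 : |∫ z in y..x, 2 * (g z * g' z)| ≤ M := by
      have := intervalIntegral.norm_integral_le_integral_norm_uIoc (f := fun z => 2 * (g z * g' z)) (a := y) (b := x) (μ := volume)
      rw [Real.norm_eq_abs] at this
      refine this.trans ?_
      have e : ∀ z, ‖2 * (g z * g' z)‖ = 2 * |g z * g' z| := by
        intro z; rw [norm_mul]; simp
      simp_rw [e]
      refine setIntegral_mono_set i2 (ae_of_all _ fun z => by positivity) ?_
      exact (uIoc_subset_uIcc.trans hsub).eventuallyLE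
    have := le_abs_self (∫ z in y..x, 2 * (g z * g' z))
    linarith
  have h2 : ∫ y in Icc a b, (g x ^ 2 - M) ≤ ∫ y in Icc a b, g y ^ 2 :=
    setIntegral_mono_on (by simp) i1 measurableSet_Icc key
  simp only [setIntegral_const, smul_eq_mul] at h2
  rw [Measure.real, Real.volume_Icc, ENNReal.toReal_ofReal (by linarith)] at h2
  rw [integral_add (i1.div_const _) i2, integral_div, ← hM]
  have hp : 0 < b - a := by linarith
  have : g x ^ 2 - M ≤ (∫ y in Icc a b, g y ^ 2) / (b - a) := by
    rw [le_div_iff₀ hp]; linarith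
  linarith

lemma two_d (F Fx Fy : ℝ × ℝ → ℝ) (a b c d : ℝ) (hab : a < b) (hcd : c < d)
    (hF : ContinuousOn F (Icc a b ×ˢ Icc c d)) (hFx : ContinuousOn Fx (Icc a b ×ˢ Icc c d))
    (hFy : ContinuousOn Fy (Icc a b ×ˢ Icc c d))
    (hx : ∀ x ∈ Icc a b, ∀ y ∈ Icc c d, HasDerivAt (fun r => F (r, y)) (Fx (x, y)) x)
    (hy : ∀ x ∈ Icc a b, ∀ y ∈ Icc c d, HasDerivAt (fun z => F (x, z)) (Fy (x, y)) y) :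
    ∫ p in Icc a b ×ˢ Icc c d, F p ^ 4 ≤
      (∫ p in Icc a b ×ˢ Icc c d, (F p ^ 2 / (b - a) + 2 * |F p * Fx p|)) *
      (∫ p in Icc a b ×ˢ Icc c d, (F p ^ 2 / (d - c) + 2 * |F p * Fy p|)) := by
  have hK : IsCompact (Icc a b ×ˢ Icc c d) := isCompact_Icc.prod isCompact_Icc
  have i4 : IntegrableOn (fun p => F p ^ 4) (Icc a b ×ˢ Icc c d) :=
    (hF.pow 4).integrableOn_compact hK
  have iφ : IntegrableOn (fun p => F p ^ 2 / (b - a) + 2 * |F p * Fx p|) (Icc a b ×ˢ Icc c d) :=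
    (((hF.pow 2).div_const _).add (continuousOn_const.mul (hF.mul hFx).abs)).integrableOn_compact hK
  have iψ : IntegrableOn (fun p => F p ^ 2 / (d - c) + 2 * |F p * Fy p|) (Icc a b ×ˢ Icc c d) :=
    (((hF.pow 2).div_const _).add (continuousOn_const.mul (hF.mul hFy).abs)).integrableOn_compact hK
  have hvol : (volume : Measure (ℝ × ℝ)).restrict (Icc a b ×ˢ Icc c d) =
      (volume.restrict (Icc a b)).prod (volume.restrict (Icc c d)) := by
    rw [Measure.volume_eq_prod, Measure.prod_restrict]
  unfold IntegrableOn at i4 iφ iψ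
  have hmem : ∀ᵐ p ∂(volume : Measure (ℝ × ℝ)).restrict (Icc a b ×ˢ Icc c d),
      p ∈ Icc a b ×ˢ Icc c d := ae_restrict_mem (measurableSet_Icc.prod measurableSet_Icc)
  rw [hvol] at i4 iφ iψ hmem ⊢
  rw [integral_prod_symm _ iφ, integral_prod _ iψ, mul_comm, ← integral_prod_mul]
  refine integral_mono_ae i4 (iψ.integral_prod_left.mul_prod iφ.integral_prod_right) ?_
  filter_upwards [hmem] with p hp
  obtain ⟨p1, p2⟩ := hp
  have e1 := one_d (fun r => F (r, p.2)) (fun r => Fx (r, p.2)) a b hab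
    (fun x h => hx x h _ p2) (hFx.comp (by fun_prop) (fun x h => ⟨h, p2⟩)) p.1 p1
  have e2 := one_d (fun r => F (p.1, r)) (fun r => Fy (p.1, r)) c d hcd
    (fun x h => hy _ p1 x h) (hFy.comp (by fun_prop) (fun x h => ⟨p1, h⟩)) p.2 p2
  have : F p ^ 4 = F (p.1, p.2) ^ 2 * F (p.1, p.2) ^ 2 := by simp; ring
  rw [this]
  exact mul_le_mul e2 e1 (by positivity) ((by positivity : (0:ℝ) ≤ F (p.1, p.2) ^ 2).trans e2)

lemma rW_pos (j : ℕ) : 0 < rW j := by unfold rW; positivity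

lemma hH_pos (β : ℝ) (j : ℕ) : 0 < hH β j := by unfold hH; positivity

lemma rW_pred (j : ℕ) (hj : 1 ≤ j) : rW (j - 1) = 2 * rW j := by
  unfold rW
  rw [Nat.cast_sub hj, show -((j : ℝ) - (1 : ℕ)) = 1 + -(j : ℝ) by push_cast; ring,
    Real.rpow_add (by norm_num), Real.rpow_one]

lemma rW_anti {i j : ℕ} (h : i ≤ j) : rW j ≤ rW i := by
  unfold rW
  have : (i : ℝ) ≤ j := by exact_mod_cast h
  exact Real.rpow_le_rpow_of_exponent_le (by norm_num) (by linarith)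

lemma hH_le (β : ℝ) (hβ : 1 < β) (j : ℕ) (hj : 1 ≤ j) : hH β j ≤ 2 * rW j := by
  have h1 : (1 : ℝ) ≤ j := by exact_mod_cast hj
  rw [← rW_pred j hj]
  unfold hH rW
  apply Real.rpow_le_rpow_of_exponent_le (by norm_num)
  rw [Nat.cast_sub hj]; push_cast
  nlinarith

lemma le_hH (β : ℝ) (hβ : β ≤ 1.1) (j : ℕ) (hj : 1 ≤ j) : rW j ^ 2 ≤ hH β j := by
  have h1 : (1 : ℝ) ≤ j := by exact_mod_cast hj
  unfold hH rW
  rw [← Real.rpow_natCast, ← Real.rpow_mul (by norm_num)]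
  apply Real.rpow_le_rpow_of_exponent_le (by norm_num)
  push_cast
  nlinarith

lemma Srect_eq (β : ℝ) (j : ℕ) : Srect β j = Ico (rW j) (rW (j - 1)) ×ˢ Ioo 0 (hH β j) := by
  ext p; simp [Srect, and_assoc]

lemma Srect_restrict (β : ℝ) (j : ℕ) : (volume : Measure (ℝ × ℝ)).restrict (Srect β j) =
    volume.restrict (Icc (rW j) (rW (j - 1)) ×ˢ Icc 0 (hH β j)) := by
  rw [Srect_eq, Measure.volume_eq_prod, ← Measure.prod_restrict, ← Measure.prod_restrict,
    Measure.restrict_congr_set Ico_ae_eq_Icc, Measure.restrict_congr_set Ioo_ae_eq_Icc]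

lemma Srect_sub (β : ℝ) (m j : ℕ) (hj : j ∈ Finset.Icc 1 m) :
    Icc (rW j) (rW (j - 1)) ×ˢ Icc 0 (hH β j) ⊆ closure (Ddom β m) := by
  have h0 := rW_pos j
  have h1 := hH_pos β j
  have h2 := rW_pred j (Finset.mem_Icc.1 hj).1
  have : closure (Srect β j) = Icc (rW j) (rW (j - 1)) ×ˢ Icc 0 (hH β j) := by
    rw [Srect_eq, closure_prod_eq, closure_Ico (by linarith), closure_Ioo h1.ne]
  rw [← this]
  exact closure_mono (Set.subset_biUnion_of_mem (u := fun j => Srect β j) hj)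

lemma Srect_disj {i j : ℕ} (β : ℝ) (h : i < j) : Disjoint (Srect β i) (Srect β j) := by
  rw [Set.disjoint_left]
  rintro p ⟨h1, -⟩ ⟨-, h2, -⟩
  have := rW_anti (show i ≤ j - 1 by omega)
  linarith

lemma Srect_meas (β : ℝ) (j : ℕ) : MeasurableSet (Srect β j) := by
  rw [Srect_eq]; exact measurableSet_Ico.prod measurableSet_Ioo

lemma ptwise (a h r f x y : ℝ) (ha : 0 < a) (hh : 0 < h) (h2 : h ≤ 2 * a) (hr : a ≤ r)
    (hr2 : r ≤ 2 * a) :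
    f ^ 2 / a + 2 * |f * x| ≤ 2 * ((x ^ 2 + y ^ 2 + f ^ 2 / r ^ 2) * (2 * π * r)) ∧
    f ^ 2 / h + 2 * |f * y| ≤ (2 * (a / h)) * ((x ^ 2 + y ^ 2 + f ^ 2 / r ^ 2) * (2 * π * r)) := by
  set G := x ^ 2 + y ^ 2 + f ^ 2 / r ^ 2 with hG
  have hr0 : 0 < r := by linarith
  have hx2 := sq_nonneg x
  have hy2 := sq_nonneg y
  have hfr : 0 ≤ f ^ 2 / r ^ 2 := by positivity
  have hG0 : 0 ≤ G := by positivity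
  have k0 : f ^ 2 ≤ 4 * a ^ 2 * G := by
    have : f ^ 2 = f ^ 2 / r ^ 2 * r ^ 2 := by field_simp
    have h3 : r ^ 2 ≤ 4 * a ^ 2 := by nlinarith
    rw [this]
    calc f ^ 2 / r ^ 2 * r ^ 2 ≤ G * (4 * a ^ 2) := by gcongr; linarith
      _ = _ := by ring
  have k1 : f ^ 2 / a ≤ 4 * a * G := by rw [div_le_iff₀ ha]; linarith
  have kk : ∀ u, u ^ 2 ≤ G - f ^ 2 / r ^ 2 → 2 * |f * u| ≤ 4 * a * G := by
    intro u hu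
    have e1 : f ^ 2 ≤ 4 * a ^ 2 * (f ^ 2 / r ^ 2) := by
      have : f ^ 2 = f ^ 2 / r ^ 2 * r ^ 2 := by field_simp
      have h3 : r ^ 2 ≤ 4 * a ^ 2 := by nlinarith
      nlinarith
    have e2 : 2 * |f * u| * a ≤ f ^ 2 + a ^ 2 * u ^ 2 := by
      rw [abs_mul]
      nlinarith [sq_nonneg (|f| - a * |u|), sq_abs f, sq_abs u]
    have e3 : 2 * |f * u| * a ≤ (4 * a * G) * a := by nlinarith [sq_nonneg a, sq_nonneg u, mul_le_mul_of_nonneg_left hu (sq_nonneg a), mul_nonneg (sq_nonneg a) (sq_nonneg u)]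
    exact le_of_mul_le_mul_right e3 ha
  have kx := kk x (by linarith)
  have ky := kk y (by linarith)
  have hw : 6 * a * G ≤ G * (2 * π * r) := by
    have : 6 * a ≤ 2 * π * r := by nlinarith [Real.pi_gt_three]
    nlinarith
  have haG : 0 ≤ a * G := by positivity
  refine ⟨by linarith, ?_⟩
  have k2 : f ^ 2 / h ≤ 4 * a * G * (a / h) := by
    rw [div_le_iff₀ hh]
    have : 4 * a * G * (a / h) * h = 4 * a ^ 2 * G := by field_simp
    linarith
  have k3 : 1 ≤ 2 * (a / h) := by
    rw [← mul_div_assoc, le_div_iff₀ hh]; linarith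
  have k4 : 4 * a * G ≤ 4 * a * G * (2 * (a / h)) := le_mul_of_one_le_right (by linarith) k3
  have k5 : 2 * (a / h) * (6 * a * G) ≤ 2 * (a / h) * (G * (2 * π * r)) := by gcongr
  nlinarith

lemma interp (t u : ℝ) (ht : 0 < t) :
    |u| ^ ((13 : ℝ) / 5) ≤ t ^ ((3 : ℝ) / 5) * u ^ 2 + t ^ (-(7 : ℝ) / 5) * u ^ 4 := by
  have t1 : 0 ≤ t ^ ((3 : ℝ) / 5) * u ^ 2 := by positivity
  have t2 : 0 ≤ t ^ (-(7 : ℝ) / 5) * u ^ 4 := by positivity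
  rcases eq_or_ne u 0 with rfl | hu
  · simp
  have hu' : 0 < |u| := abs_pos.2 hu
  rcases le_total |u| t with h | h
  · have : |u| ^ ((13 : ℝ) / 5) = |u| ^ ((3 : ℝ) / 5) * u ^ 2 := by
      rw [← sq_abs u, ← Real.rpow_natCast, ← Real.rpow_add hu']; norm_num
    have h3 : |u| ^ ((3 : ℝ) / 5) ≤ t ^ ((3 : ℝ) / 5) := Real.rpow_le_rpow hu'.le h (by norm_num)
    have := mul_le_mul_of_nonneg_right h3 (sq_nonneg u)
    linarith
  · have : |u| ^ ((13 : ℝ) / 5) = |u| ^ (-(7 : ℝ) / 5) * u ^ 4 := by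
      rw [← (show Even 4 by decide).pow_abs u, ← Real.rpow_natCast, ← Real.rpow_add hu']; norm_num
    have h3 : |u| ^ (-(7 : ℝ) / 5) ≤ t ^ (-(7 : ℝ) / 5) :=
      Real.rpow_le_rpow_of_nonpos ht h (by norm_num)
    have := mul_le_mul_of_nonneg_right h3 (show 0 ≤ u ^ 4 by positivity)
    linarith

lemma rect_ineq (F Fx Fy : ℝ × ℝ → ℝ) (β : ℝ) (hβ : 1 < β) (hβ' : β ≤ 1.1) (j : ℕ) (hj : 1 ≤ j)
    (hF : ContinuousOn F (Icc (rW j) (rW (j - 1)) ×ˢ Icc 0 (hH β j)))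
    (hFx : ContinuousOn Fx (Icc (rW j) (rW (j - 1)) ×ˢ Icc 0 (hH β j)))
    (hFy : ContinuousOn Fy (Icc (rW j) (rW (j - 1)) ×ˢ Icc 0 (hH β j)))
    (hx : ∀ x ∈ Icc (rW j) (rW (j - 1)), ∀ y ∈ Icc 0 (hH β j),
      HasDerivAt (fun r => F (r, y)) (Fx (x, y)) x)
    (hy : ∀ x ∈ Icc (rW j) (rW (j - 1)), ∀ y ∈ Icc 0 (hH β j),
      HasDerivAt (fun z => F (x, z)) (Fy (x, y)) y)
    (hG : IntegrableOn (fun p => (Fx p ^ 2 + Fy p ^ 2 + F p ^ 2 / p.1 ^ 2) * (2 * π * p.1))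
      (Icc (rW j) (rW (j - 1)) ×ˢ Icc 0 (hH β j))) :
    ∫ p in Srect β j, F p ^ 4 * (2 * π * p.1) ≤
      64 * (∫ p in Srect β j, (Fx p ^ 2 + Fy p ^ 2 + F p ^ 2 / p.1 ^ 2) * (2 * π * p.1)) ^ 2 := by
  rw [Srect_restrict]
  have ha := rW_pos j
  have hh := hH_pos β j
  have hb := rW_pred j hj
  have hle := hH_le β hβ j hj
  have hge := le_hH β hβ' j hj
  have h2 := two_d F Fx Fy _ _ _ _ (show rW j < rW (j - 1) by linarith) hh hF hFx hFy hx hy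
  rw [sub_zero, show rW (j - 1) - rW j = rW j by linarith] at h2
  rw [hb] at h2 hF hFx hFy hG ⊢
  set a := rW j
  set h := hH β j
  set K := Icc a (2 * a) ×ˢ Icc 0 h with hKdef
  have hK : IsCompact K := isCompact_Icc.prod isCompact_Icc
  have hKm : MeasurableSet K := measurableSet_Icc.prod measurableSet_Icc
  set e := ∫ p in K, (Fx p ^ 2 + Fy p ^ 2 + F p ^ 2 / p.1 ^ 2) * (2 * π * p.1) with he
  have h3 : ∫ p in K, (F p ^ 2 / a + 2 * |F p * Fx p|) ≤ 2 * e := by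
    rw [he, ← integral_const_mul]
    refine setIntegral_mono_on ?_ (hG.const_mul 2) hKm ?_
    · exact (((hF.pow 2).div_const _).add
        (continuousOn_const.mul (hF.mul hFx).abs)).integrableOn_compact hK
    · intro p hp
      exact (ptwise a h p.1 _ _ _ ha hh hle hp.1.1 hp.1.2).1
  have h4 : ∫ p in K, (F p ^ 2 / h + 2 * |F p * Fy p|) ≤ 2 * (a / h) * e := by
    rw [he, ← integral_const_mul]
    refine setIntegral_mono_on ?_ (hG.const_mul _) hKm ?_
    · exact (((hF.pow 2).div_const _).add
        (continuousOn_const.mul (hF.mul hFy).abs)).integrableOn_compact hK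
    · intro p hp
      exact (ptwise a h p.1 _ _ _ ha hh hle hp.1.1 hp.1.2).2
  have h5 : ∫ p in K, F p ^ 4 * (2 * π * p.1) ≤ (16 * a) * ∫ p in K, F p ^ 4 := by
    rw [← integral_const_mul]
    refine setIntegral_mono_on ?_ ?_ hKm ?_
    · exact ((hF.pow 4).mul (by fun_prop)).integrableOn_compact hK
    · exact (continuousOn_const.mul (hF.pow 4)).integrableOn_compact hK
    · intro p hp
      have h6 := hp.1.2
      rw [mul_comm]
      refine mul_le_mul_of_nonneg_right ?_ (by positivity)
      have := Real.pi_lt_four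
      have := Real.pi_pos
      nlinarith
  have n4 : 0 ≤ ∫ p in K, (F p ^ 2 / h + 2 * |F p * Fy p|) :=
    integral_nonneg fun p => by positivity
  have n3 : 0 ≤ ∫ p in K, (F p ^ 2 / a + 2 * |F p * Fx p|) :=
    integral_nonneg fun p => by positivity
  have h7 := h2.trans (mul_le_mul h3 h4 n4 (n3.trans h3))
  have h8 : a ^ 2 / h ≤ 1 := by rw [div_le_one hh]; exact hge
  calc _ ≤ _ := h5
    _ ≤ 16 * a * (2 * e * (2 * (a / h) * e)) := by gcongr
    _ = 64 * (a ^ 2 / h) * e ^ 2 := by ring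
    _ ≤ 64 * 1 * e ^ 2 := by gcongr
    _ = _ := by ring

/-- Uniform weighted Sobolev inequality on `D_m` with exponent `13/5`. -/
theorem uniform_weighted_sobolev :
    ∃ Cs : ℝ, 0 < Cs ∧
      ∀ (β : ℝ), 1 < β → β ≤ 1.1 →
      ∀ (m : ℕ), 1 ≤ m →
      ∀ F : ℝ × ℝ → ℝ,
        (∃ U : Set (ℝ × ℝ), IsOpen U ∧ closure (Ddom β m) ⊆ U ∧ ContDiffOn ℝ 1 F U) →
        (cylIntegral β m fun p => |F p| ^ ((13 : ℝ) / 5)) ^ ((10 : ℝ) / 13) ≤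
          Cs * cylIntegral β m
            (fun p => (pdr F p) ^ 2 + (pdz F p) ^ 2 + (F p) ^ 2 / p.1 ^ 2) := by
  refine ⟨65, by norm_num, ?_⟩
  rintro β hβ hβ' m hm F ⟨U, hU, hDU, hFU⟩
  have hd : ∀ p ∈ U, HasFDerivAt F (fderiv ℝ F p) p := fun p hp =>
    ((hFU.differentiableOn (by norm_num)).differentiableAt (hU.mem_nhds hp)).hasFDerivAt
  have hcf : ContinuousOn (fderiv ℝ F) U := hFU.continuousOn_fderiv_of_isOpen hU le_rfl
  have hdr : ∀ p ∈ U, HasDerivAt (fun r => F (r, p.2)) (fderiv ℝ F p (1, 0)) p.1 := by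
    intro p hp
    exact HasFDerivAt.comp_hasDerivAt (f := fun r => (r, p.2)) p.1 (hd p hp)
      ((hasDerivAt_id p.1).prodMk (hasDerivAt_const p.1 p.2))
  have hdz : ∀ p ∈ U, HasDerivAt (fun r => F (p.1, r)) (fderiv ℝ F p (0, 1)) p.2 := by
    intro p hp
    exact HasFDerivAt.comp_hasDerivAt (f := fun r => (p.1, r)) p.2 (hd p hp)
      ((hasDerivAt_const p.2 p.1).prodMk (hasDerivAt_id p.2))
  have er : ∀ p ∈ U, pdr F p = fderiv ℝ F p (1, 0) := fun p hp => (hdr p hp).deriv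
  have ez : ∀ p ∈ U, pdz F p = fderiv ℝ F p (0, 1) := fun p hp => (hdz p hp).deriv
  have cF : ContinuousOn F U := hFU.continuousOn
  have cr : ContinuousOn (pdr F) U :=
    (hcf.clm_apply continuousOn_const).congr er
  have cz : ContinuousOn (pdz F) U :=
    (hcf.clm_apply continuousOn_const).congr ez
  have hsub : ∀ j ∈ Finset.Icc 1 m, Icc (rW j) (rW (j - 1)) ×ˢ Icc 0 (hH β j) ⊆ U :=
    fun j hj => (Srect_sub β m j hj).trans hDU
  have hcK : ∀ j, IsCompact (Icc (rW j) (rW (j - 1)) ×ˢ Icc 0 (hH β j)) :=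
    fun j => isCompact_Icc.prod isCompact_Icc
  have cG : ∀ j ∈ Finset.Icc 1 m, ContinuousOn
      (fun p => (pdr F p ^ 2 + pdz F p ^ 2 + F p ^ 2 / p.1 ^ 2) * (2 * π * p.1))
      (Icc (rW j) (rW (j - 1)) ×ˢ Icc 0 (hH β j)) := by
    intro j hj
    have s := hsub j hj
    refine ContinuousOn.mul (((((cr.mono s).pow 2).add ((cz.mono s).pow 2))).add
      (((cF.mono s).pow 2).div (by fun_prop) ?_)) (by fun_prop)
    intro p hp
    have := (rW_pos j).trans_le hp.1.1
    positivity
  have c2 : ContinuousOn (fun p => F p ^ 2 * (2 * π * p.1)) U := (cF.pow 2).mul (by fun_prop)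
  have c4 : ContinuousOn (fun p => F p ^ 4 * (2 * π * p.1)) U := (cF.pow 4).mul (by fun_prop)
  have cq : ContinuousOn (fun p => |F p| ^ ((13 : ℝ) / 5) * (2 * π * p.1)) U :=
    (cF.abs.rpow_const fun _ _ => Or.inr (by norm_num)).mul (by fun_prop)
  have intg : ∀ f : ℝ × ℝ → ℝ, (∀ j ∈ Finset.Icc 1 m,
      ContinuousOn f (Icc (rW j) (rW (j - 1)) ×ˢ Icc 0 (hH β j))) →
      ∀ j ∈ Finset.Icc 1 m, IntegrableOn f (Srect β j) := by
    intro f hf j hj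
    have := (hf j hj).integrableOn_compact (μ := volume) (hcK j)
    unfold IntegrableOn at this ⊢
    rwa [Srect_restrict]
  have intD : ∀ f : ℝ × ℝ → ℝ, (∀ j ∈ Finset.Icc 1 m,
      ContinuousOn f (Icc (rW j) (rW (j - 1)) ×ˢ Icc 0 (hH β j))) →
      IntegrableOn f (Ddom β m) := fun f hf => integrableOn_finset_iUnion.2 (intg f hf)
  have sumD : ∀ f : ℝ × ℝ → ℝ, (∀ j ∈ Finset.Icc 1 m,
      ContinuousOn f (Icc (rW j) (rW (j - 1)) ×ˢ Icc 0 (hH β j))) →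
      ∫ p in Ddom β m, f p = ∑ j ∈ Finset.Icc 1 m, ∫ p in Srect β j, f p := by
    intro f hf
    refine integral_biUnion_finset _ (fun j _ => Srect_meas β j) ?_ (intg f hf)
    intro i _ j _ hij
    rcases lt_or_gt_of_ne hij with h | h
    · exact Srect_disj β h
    · exact (Srect_disj β h).symm
  have hDm : MeasurableSet (Ddom β m) := Finset.measurableSet_biUnion _ fun j _ => Srect_meas β j
  have hr01 : ∀ p ∈ Ddom β m, 0 < p.1 ∧ p.1 ≤ 1 := by
    intro p hp
    simp only [Ddom, mem_iUnion] at hp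
    obtain ⟨j, hj, h1, h2, -⟩ := hp
    refine ⟨(rW_pos j).trans_le h1, h2.le.trans ((rW_anti (Nat.zero_le _)).trans ?_)⟩
    simp [rW]
  unfold cylIntegral
  set T := ∫ p in Ddom β m, (pdr F p ^ 2 + pdz F p ^ 2 + F p ^ 2 / p.1 ^ 2) * (2 * π * p.1) with hT
  set I := ∫ p in Ddom β m, |F p| ^ ((13 : ℝ) / 5) * (2 * π * p.1) with hI
  have hpi := Real.pi_pos
  have hT0 : 0 ≤ T := setIntegral_nonneg hDm fun p hp => by
    have := (hr01 p hp).1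
    positivity
  have hI0 : 0 ≤ I := setIntegral_nonneg hDm fun p hp => by
    have := (hr01 p hp).1
    positivity
  have hsum := sumD _ cG
  rw [← hT] at hsum
  have hE0 : ∀ j ∈ Finset.Icc 1 m, 0 ≤ ∫ p in Srect β j,
      (pdr F p ^ 2 + pdz F p ^ 2 + F p ^ 2 / p.1 ^ 2) * (2 * π * p.1) := by
    intro j hj
    refine setIntegral_nonneg (Srect_meas β j) fun p hp => ?_
    have := (rW_pos j).trans_le hp.1
    positivity
  have b2 : ∫ p in Ddom β m, F p ^ 2 * (2 * π * p.1) ≤ T := by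
    refine setIntegral_mono_on (intD _ fun j hj => c2.mono (hsub j hj)) (intD _ cG) hDm ?_
    intro p hp
    obtain ⟨h0, h1⟩ := hr01 p hp
    have : F p ^ 2 ≤ F p ^ 2 / p.1 ^ 2 := by
      rw [le_div_iff₀ (by positivity)]
      have : p.1 ^ 2 ≤ 1 := by nlinarith
      nlinarith [sq_nonneg (F p)]
    gcongr
    nlinarith [sq_nonneg (pdr F p), sq_nonneg (pdz F p)]
  have b4 : ∫ p in Ddom β m, F p ^ 4 * (2 * π * p.1) ≤ 64 * T ^ 2 := by
    rw [sumD _ fun j hj => c4.mono (hsub j hj)]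
    calc _ ≤ ∑ j ∈ Finset.Icc 1 m, 64 * ((∫ p in Srect β j,
          (pdr F p ^ 2 + pdz F p ^ 2 + F p ^ 2 / p.1 ^ 2) * (2 * π * p.1)) * T) := by
          refine Finset.sum_le_sum fun j hj => ?_
          have s := hsub j hj
          refine (rect_ineq F (pdr F) (pdz F) β hβ hβ' j (Finset.mem_Icc.1 hj).1 (cF.mono s)
            (cr.mono s) (cz.mono s) ?_ ?_ ((cG j hj).integrableOn_compact (hcK j))).trans ?_
          · intro x hx y hy
            have hm : (x, y) ∈ U := s ⟨hx, hy⟩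
            rw [er _ hm]; exact hdr _ hm
          · intro x hx y hy
            have hm : (x, y) ∈ U := s ⟨hx, hy⟩
            rw [ez _ hm]; exact hdz _ hm
          · rw [sq]
            have := hE0 j hj
            gcongr
            rw [hsum]
            exact Finset.single_le_sum hE0 hj
      _ = 64 * T ^ 2 := by
          rw [← Finset.mul_sum, ← Finset.sum_mul, ← hsum]; ring
  have main : ∀ t : ℝ, 0 < t → I ≤ t ^ ((3 : ℝ) / 5) * T + t ^ (-(7 : ℝ) / 5) * (64 * T ^ 2) := by
    intro t ht
    have i2 := (intD _ fun j hj => c2.mono (hsub j hj)).const_mul (t ^ ((3 : ℝ) / 5))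
    have i4 := (intD _ fun j hj => c4.mono (hsub j hj)).const_mul (t ^ (-(7 : ℝ) / 5))
    have h1 : I ≤ ∫ p in Ddom β m, (t ^ ((3 : ℝ) / 5) * (F p ^ 2 * (2 * π * p.1)) +
        t ^ (-(7 : ℝ) / 5) * (F p ^ 4 * (2 * π * p.1))) := by
      refine setIntegral_mono_on (intD _ fun j hj => cq.mono (hsub j hj)) (i2.add i4) hDm ?_
      intro p hp
      have h0 := (hr01 p hp).1
      calc _ ≤ (t ^ ((3 : ℝ) / 5) * F p ^ 2 + t ^ (-(7 : ℝ) / 5) * F p ^ 4) * (2 * π * p.1) := by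
            gcongr; exact interp t (F p) ht
        _ = _ := by ring
    rw [integral_add i2 i4, integral_const_mul, integral_const_mul] at h1
    refine h1.trans ?_
    gcongr
  rcases hT0.eq_or_lt with h0 | hTp
  · have := main 1 one_pos
    rw [← h0] at this
    have hI' : I = 0 := le_antisymm (by simpa using this) hI0
    rw [hI', ← h0, Real.zero_rpow (by norm_num)]; simp
  · have h1 := main (T ^ ((1 : ℝ) / 2)) (by positivity)
    rw [← Real.rpow_mul hT0, ← Real.rpow_mul hT0] at h1
    have e1 : T ^ ((1 : ℝ) / 2 * (3 / 5)) * T = T ^ ((13 : ℝ) / 10) := by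
      nth_rewrite 2 [← Real.rpow_one T]
      rw [← Real.rpow_add hTp]; norm_num
    have e2 : T ^ ((1 : ℝ) / 2 * (-7 / 5)) * T ^ 2 = T ^ ((13 : ℝ) / 10) := by
      rw [← Real.rpow_natCast, ← Real.rpow_add hTp]; norm_num
    have h2 : I ≤ 65 * T ^ ((13 : ℝ) / 10) := by linarith
    calc I ^ ((10 : ℝ) / 13) ≤ (65 * T ^ ((13 : ℝ) / 10)) ^ ((10 : ℝ) / 13) :=
          Real.rpow_le_rpow hI0 h2 (by norm_num)
      _ = 65 ^ ((10 : ℝ) / 13) * T := by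
          rw [Real.mul_rpow (by norm_num) (by positivity), ← Real.rpow_mul hT0]; norm_num
      _ ≤ 65 * T := by
          gcongr
          calc (65 : ℝ) ^ ((10 : ℝ) / 13) ≤ 65 ^ (1 : ℝ) :=
                Real.rpow_le_rpow_of_exponent_le (by norm_num) (by norm_num)
            _ = 65 := Real.rpow_one _
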